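/- Let p₁₀, p₀₁, p₂₀, p₁₁, p₀₂ be real numbers with p₁₀² + p₀₁² ≠ 0, and set P₁(θ) = p₁₀ cos θ + p₀₁ sin θ and P₂(θ) = p₂₀ cos²θ + p₁₁ cos θ sin θ + p₀₂ sin²θ. Then the equation dr/dθ = r(P₁(θ) r + P₂(θ) r²) has a center at r = 0 (equivalently, the origin of the cubic system x' = −y + x(P₁(x,y)+P₂(x,y)), y' = x + y(P₁(x,y)+P₂(x,y)) is a center) if and only if p₂₀ + p₀₂ = 0 and p₂₀(p₀₁² − p₁₀²) − p₁₁ p₁₀ p₀₁ = 0. -/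

import Mathlib

open Real

/-- A 2π-periodic scalar ODE `dr/dθ = F θ r` has a center at `r = 0` if every solution
with `|r 0|` sufficiently small is defined on `[0, 2π]` and satisfies `r (2π) = r 0`. -/
def HasCenterAtZero (F : ℝ → ℝ → ℝ) : Prop :=
  ∃ ε > (0 : ℝ), ∀ r : ℝ → ℝ, |r 0| < ε →
    (∀ θ ∈ Set.Icc (0 : ℝ) (2 * Real.pi), HasDerivAt r (F θ (r θ)) θ) →
    r (2 * Real.pi) = r 0

/-!
A solution curve that is reversed by the reflection `θ ↦ 2t - θ` is symmetric about `t`. Hence a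
`2π`-periodic equation whose right-hand side is odd about some `t` (and then also about `t + π`) has
a center. The two algebraic conditions say that `P₂` vanishes at a zero `t` of `P₁` and has mean
zero, which makes both coefficients odd about `t`.

Conversely, put `u' = A` and `z = 1 / r + u`, so that `r' = A r² + B r³` becomes
`z' = -B / (z - u)`. A center forces all solutions with `z` large to be periodic. Let `mₖ` be the
mean of `B uᵏ` and `Fₖ` a periodic primitive of `B uᵏ - mₖ`. Along such a solution the periodic
function `z² / 2 + F₀ + F₁ / z + F₂ / z²` has derivative `-(m₀ + m₁ / z + m₂ / z²) + O(z⁻³)`, which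
vanishes somewhere by Rolle's theorem. So `m₀ z² + m₁ z + m₂` is arbitrarily small for arbitrarily
large `z`, and `m₀ = m₁ = m₂ = 0`.
-/

open Set Filter Metric
open scoped NNReal Topology

/-- The right-hand side of the Abel equation `dr/dθ = A r² + B r³`, factored so as to agree
syntactically with the equation of `cubic_center_conditions`. -/
def abelField (A B : ℝ → ℝ) (θ r : ℝ) : ℝ :=
  r * (A θ * r + B θ * r ^ 2)

/-! ### Reversible equations -/

section Reversible

variable {E : Type*} [NormedAddCommGroup E]

/-- The regularity of a time-dependent vector field that yields uniqueness of solutions: in the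
space variable it is Lipschitz on bounded sets, uniformly for times in a compact interval. -/
def LipschitzOnBounded (f : ℝ → E → E) : Prop :=
  ∀ a b R : ℝ, ∃ K : ℝ≥0, ∀ t ∈ Icc a b, LipschitzOnWith K (f t) (closedBall 0 R)

theorem eq_reflection_of_odd [NormedSpace ℝ E] {f : ℝ → E → E} (hf : LipschitzOnBounded f)
    {t : ℝ} (hodd : Function.Odd fun s ↦ f (t + s)) {r : ℝ → E} {d : ℝ} (hd : 0 ≤ d)
    (hr : ∀ θ ∈ Icc (t - d) (t + d), HasDerivAt r (f θ (r θ)) θ) :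
    r (t + d) = r (t - d) := by
  obtain ⟨R, hR⟩ := isCompact_Icc.exists_bound_of_continuousOn
    fun θ hθ ↦ (hr θ hθ).continuousAt.continuousWithinAt
  obtain ⟨K, hK⟩ := hf t (t + d) R
  have mem_add {s : ℝ} (hs : s ∈ Icc 0 d) : t + s ∈ Icc (t - d) (t + d) := by
    constructor <;> linarith [hs.1, hs.2]
  have mem_sub {s : ℝ} (hs : s ∈ Icc 0 d) : t - s ∈ Icc (t - d) (t + d) := by
    constructor <;> linarith [hs.1, hs.2]
  have deriv_add (s : ℝ) (hs : s ∈ Icc 0 d) :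
      HasDerivAt (fun s ↦ r (t + s)) (f (t + s) (r (t + s))) s :=
    (hr _ (mem_add hs)).comp_const_add t s
  have deriv_sub (s : ℝ) (hs : s ∈ Icc 0 d) :
      HasDerivAt (fun s ↦ r (t - s)) (f (t + s) (r (t - s))) s := by
    convert (hr _ (mem_sub hs)).comp_const_sub t s using 1
    simpa [sub_eq_add_neg] using congrFun (hodd (-s)) (r (t - s))
  refine ODE_solution_unique_of_mem_Icc_right (v := fun s ↦ f (t + s)) (K := K)
    (s := fun _ ↦ closedBall 0 R)
    (fun s hs ↦ hK _ ⟨by linarith [hs.1], by linarith [hs.2]⟩)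
    (fun s hs ↦ (deriv_add s hs).continuousAt.continuousWithinAt)
    (fun s hs ↦ (deriv_add s (Ico_subset_Icc_self hs)).hasDerivWithinAt)
    (fun s hs ↦ mem_closedBall_zero_iff.2 (hR _ (mem_add (Ico_subset_Icc_self hs))))
    (fun s hs ↦ (deriv_sub s hs).continuousAt.continuousWithinAt)
    (fun s hs ↦ (deriv_sub s (Ico_subset_Icc_self hs)).hasDerivWithinAt)
    (fun s hs ↦ mem_closedBall_zero_iff.2 (hR _ (mem_sub (Ico_subset_Icc_self hs))))
    (by simp) (right_mem_Icc.2 hd)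

end Reversible

theorem odd_add_int_mul_half_period {G : Type*} [Neg G] {f : ℝ → G} {t T : ℝ}
    (hper : Function.Periodic f (2 * T)) (hodd : Function.Odd fun s ↦ f (t + s)) (n : ℤ) :
    Function.Odd fun s ↦ f (t + n * T + s) := by
  intro s
  calc f (t + n * T + -s) = f (t + -(s - n * T)) := by ring_nf
    _ = -f (t + (s - n * T)) := hodd _
    _ = -f (t + (s - n * T) + n * (2 * T)) := by rw [hper.int_mul n]
    _ = -f (t + n * T + s) := by ring_nf

theorem hasCenterAtZero_of_odd {F : ℝ → ℝ → ℝ} (hF : LipschitzOnBounded F)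
    (hper : Function.Periodic F (2 * π)) {t : ℝ} (hodd : Function.Odd fun s ↦ F (t + s)) :
    HasCenterAtZero F := by
  wlog ht : t ∈ Icc 0 π generalizing t
  · obtain ⟨n, hn, -⟩ := existsUnique_add_zsmul_mem_Ico pi_pos t 0
    rw [zsmul_eq_mul, zero_add] at hn
    exact this (odd_add_int_mul_half_period hper hodd n) (Ico_subset_Icc_self hn)
  have hodd' : Function.Odd fun s ↦ F (t + π + s) := by
    simpa using odd_add_int_mul_half_period hper hodd 1
  refine ⟨1, one_pos, fun r _ hr ↦ ?_⟩
  have about_t : r (t + t) = r (t - t) := eq_reflection_of_odd hF hodd ht.1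
    fun θ hθ ↦ hr θ ⟨by linarith [hθ.1], by linarith [hθ.2, ht.2]⟩
  have about_t_add_pi : r (t + π + (π - t)) = r (t + π - (π - t)) :=
    eq_reflection_of_odd hF hodd' (sub_nonneg.2 ht.2)
      fun θ hθ ↦ hr θ ⟨by linarith [hθ.1, ht.1], by linarith [hθ.2]⟩
  calc r (2 * π) = r (t + π + (π - t)) := by ring_nf
    _ = r (t + π - (π - t)) := about_t_add_pi
    _ = r (t + t) := by ring_nf
    _ = r 0 := by rw [about_t, sub_self]

theorem lipschitzOnBounded_abelField {A B : ℝ → ℝ} (hA : Continuous A) (hB : Continuous B) :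
    LipschitzOnBounded (abelField A B) := by
  intro a b R
  let g : ℝ × ℝ × ℝ → ℝ := fun p ↦
    A p.1 * (p.2.1 + p.2.2) + B p.1 * (p.2.1 ^ 2 + p.2.1 * p.2.2 + p.2.2 ^ 2)
  have hg : Continuous g := by fun_prop
  obtain ⟨K, hK⟩ := ((isCompact_Icc (a := a) (b := b)).prod
    ((isCompact_closedBall (0 : ℝ) R).prod
      (isCompact_closedBall (0 : ℝ) R))).exists_bound_of_continuousOn hg.continuousOn
  refine ⟨K.toNNReal, fun θ hθ ↦ LipschitzOnWith.of_dist_le_mul fun x hx y hy ↦ ?_⟩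
  calc dist (abelField A B θ x) (abelField A B θ y) = ‖g (θ, x, y)‖ * dist x y := by
        rw [Real.dist_eq, Real.dist_eq, Real.norm_eq_abs, ← abs_mul]
        simp only [abelField, g]
        ring_nf
    _ ≤ K.toNNReal * dist x y := by
        gcongr
        exact (hK _ ⟨hθ, hx, hy⟩).trans (Real.le_coe_toNNReal K)

theorem odd_abelField {A B : ℝ → ℝ} {t : ℝ} (hA : Function.Odd fun s ↦ A (t + s))
    (hB : Function.Odd fun s ↦ B (t + s)) : Function.Odd fun s ↦ abelField A B (t + s) := by
  intro s
  funext r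
  have hAs : A (t + -s) = -A (t + s) := hA s
  have hBs : B (t + -s) = -B (t + s) := hB s
  simp only [abelField, Pi.neg_apply, hAs, hBs]
  ring

theorem periodic_abelField {A B : ℝ → ℝ} {T : ℝ} (hA : Function.Periodic A T)
    (hB : Function.Periodic B T) : Function.Periodic (abelField A B) T := by
  intro θ
  funext r
  simp only [abelField, hA θ, hB θ]

/-! ### Solutions near infinity -/

theorem exists_forall_mem_Icc_hasDerivWithinAt_of_bounded {E : Type*} [NormedAddCommGroup E]
    [NormedSpace ℝ E] [CompleteSpace E] {f : ℝ → E → E} {a b : ℝ} {K L : ℝ≥0}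
    (hlip : ∀ t ∈ Icc a b, LipschitzWith K (f t))
    (hcont : ∀ x, ContinuousOn (f · x) (Icc a b))
    (hbound : ∀ t ∈ Icc a b, ∀ x, ‖f t x‖ ≤ L) (hab : a ≤ b) (x₀ : E) :
    ∃ α : ℝ → E, ∀ t ∈ Icc a b,
      HasDerivWithinAt α (f t (α t)) (Icc a b) t ∧ ‖α t - x₀‖ ≤ L * (b - a) := by
  have hPL : IsPicardLindelof f (⟨a, left_mem_Icc.2 hab⟩ : Icc a b) x₀
      (L * (b - a).toNNReal) 0 L K :=
    { lipschitzOnWith := fun t ht ↦ (hlip t ht).lipschitzOnWith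
      continuousOn := fun x _ ↦ hcont x
      norm_le := fun t ht x _ ↦ hbound t ht x
      mul_max_le := by simp [hab] }
  obtain ⟨α, hα₀, hα⟩ := hPL.exists_eq_forall_mem_Icc_hasDerivWithinAt₀
  refine ⟨α, fun t ht ↦ ⟨hα t ht, ?_⟩⟩
  calc ‖α t - x₀‖ = ‖α t - α a‖ := by rw [hα₀]
    _ ≤ L * ‖t - a‖ := (convex_Icc a b).norm_image_sub_le_of_norm_hasDerivWithin_le hα
        (fun s hs ↦ hbound s hs _) (left_mem_Icc.2 hab) ht
    _ ≤ L * (b - a) := by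
        rw [Real.norm_of_nonneg (sub_nonneg.2 ht.1)]
        gcongr
        exact ht.2

theorem lipschitzWith_inv_max_one : LipschitzWith 1 fun x : ℝ ↦ (max x 1)⁻¹ := by
  refine LipschitzWith.of_dist_le_mul fun x y ↦ ?_
  have hx : 1 ≤ max x 1 := le_max_right x 1
  have hy : 1 ≤ max y 1 := le_max_right y 1
  rw [NNReal.coe_one, one_mul, dist_inv_inv₀ (by positivity) (by positivity), Real.dist_eq]
  calc |max x 1 - max y 1| / (‖max x 1‖ * ‖max y 1‖) ≤ |max x 1 - max y 1| := by
        refine div_le_self (abs_nonneg _) (one_le_mul_of_one_le_of_one_le ?_ ?_)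
        · exact hx.trans (le_abs_self _)
        · exact hy.trans (le_abs_self _)
    _ ≤ dist x y := by simpa using! abs_max_sub_max_le_abs x y 1

/-- The right-hand side of `dz/dθ = -B / (z - u)`, which is the Abel equation
`dr/dθ = A r² + B r³` in the variable `z = 1 / r + u`, where `u' = A`. Only its values for `z > u`
are meaningful. -/
noncomputable def cherkasField (B u : ℝ → ℝ) (θ z : ℝ) : ℝ :=
  -B θ / (z - u θ)

/-- A solution over `[0, 2π]` of the equation with right-hand side `cherkasField B u` that stays at
distance at least `N` above both zero and the graph of `u`. For large `N` it corresponds to a small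
positive solution of the Abel equation. -/
structure IsLargeSolution (B u : ℝ → ℝ) (N : ℝ) (z : ℝ → ℝ) : Prop where
  hasDerivAt : ∀ θ ∈ Icc 0 (2 * π), HasDerivAt z (cherkasField B u θ (z θ)) θ
  le : ∀ θ ∈ Icc 0 (2 * π), N ≤ z θ
  le_sub : ∀ θ ∈ Icc 0 (2 * π), N ≤ z θ - u θ

theorem hasDerivAt_abelField_of_cherkasField {A B u z : ℝ → ℝ} {θ : ℝ}
    (hu : HasDerivAt u (A θ) θ) (hz : HasDerivAt z (cherkasField B u θ (z θ)) θ)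
    (hne : z θ - u θ ≠ 0) :
    HasDerivAt (fun t ↦ (z t - u t)⁻¹) (abelField A B θ (z θ - u θ)⁻¹) θ := by
  refine ((hz.sub hu).inv hne).congr_deriv ?_
  simp only [abelField, cherkasField, Pi.sub_apply]
  field_simp
  ring

/-- `cherkasField` with its denominator truncated at `1`, which makes it bounded and Lipschitz in
`z` without changing it where `1 ≤ z - u`. -/
noncomputable def truncatedCherkasField (B u : ℝ → ℝ) (θ z : ℝ) : ℝ :=
  -B θ * (max (z - u θ) 1)⁻¹

section Truncation

variable {B u : ℝ → ℝ} {θ : ℝ}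

theorem truncatedCherkasField_eq_cherkasField {z : ℝ} (h : 1 ≤ z - u θ) :
    truncatedCherkasField B u θ z = cherkasField B u θ z := by
  rw [truncatedCherkasField, cherkasField, max_eq_left h, div_eq_mul_inv]

theorem norm_truncatedCherkasField_le (z : ℝ) : ‖truncatedCherkasField B u θ z‖ ≤ ‖B θ‖ := by
  have one_le : 1 ≤ ‖max (z - u θ) 1‖ := (le_max_right _ 1).trans (le_abs_self _)
  rw [truncatedCherkasField, norm_mul, norm_neg, norm_inv]
  exact mul_le_of_le_one_right (norm_nonneg _) (inv_le_one_of_one_le₀ one_le)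

theorem lipschitzWith_truncatedCherkasField {L : ℝ≥0} (hL : ‖B θ‖ ≤ L) :
    LipschitzWith L (truncatedCherkasField B u θ) := by
  refine LipschitzWith.of_dist_le_mul fun x y ↦ ?_
  have inv_lip := lipschitzWith_inv_max_one.dist_le_mul (x - u θ) (y - u θ)
  rw [NNReal.coe_one, one_mul, dist_sub_right] at inv_lip
  rw [truncatedCherkasField, truncatedCherkasField, dist_eq_norm, ← mul_sub, norm_mul, norm_neg,
    ← dist_eq_norm]
  gcongr

theorem continuous_truncatedCherkasField (hB : Continuous B) (hu : Continuous u) (z : ℝ) :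
    Continuous fun θ ↦ truncatedCherkasField B u θ z :=
  hB.neg.mul (lipschitzWith_inv_max_one.continuous.comp (continuous_const.sub hu))

end Truncation

theorem exists_isLargeSolution {B u : ℝ → ℝ} (hB : Continuous B) (hu : Continuous u) {N : ℝ}
    (hN : 1 ≤ N) : ∃ z, IsLargeSolution B u N z := by
  have hab : (-1 : ℝ) ≤ 2 * π + 1 := by linarith [pi_pos]
  obtain ⟨L, hL⟩ := (isCompact_Icc (a := -1) (b := 2 * π + 1)).exists_bound_of_continuousOn
    hB.continuousOn
  obtain ⟨M, hM⟩ := (isCompact_Icc (a := -1) (b := 2 * π + 1)).exists_bound_of_continuousOn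
    hu.continuousOn
  lift L to ℝ≥0 using (norm_nonneg _).trans (hL _ (left_mem_Icc.2 hab))
  have hM₀ : 0 ≤ M := (norm_nonneg _).trans (hM _ (left_mem_Icc.2 hab))
  obtain ⟨z, hz⟩ := exists_forall_mem_Icc_hasDerivWithinAt_of_bounded
    (fun θ hθ ↦ lipschitzWith_truncatedCherkasField (hL θ hθ))
    (fun z ↦ (continuous_truncatedCherkasField hB hu z).continuousOn)
    (fun θ hθ z ↦ (norm_truncatedCherkasField_le z).trans (hL θ hθ)) hab
    (N + M + L * (2 * π + 1 - -1))
  have le_z (θ : ℝ) (hθ : θ ∈ Icc (-1) (2 * π + 1)) : N + M ≤ z θ := by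
    linarith [neg_le_of_abs_le (hz θ hθ).2]
  have le_z_sub (θ : ℝ) (hθ : θ ∈ Icc (-1) (2 * π + 1)) : N ≤ z θ - u θ := by
    linarith [le_z θ hθ, le_of_abs_le (hM θ hθ)]
  have subset : Icc 0 (2 * π) ⊆ Icc (-1) (2 * π + 1) :=
    Icc_subset_Icc (by norm_num) (by linarith)
  refine ⟨z, fun θ hθ ↦ ?_, fun θ hθ ↦ by linarith [le_z θ (subset hθ)],
    fun θ hθ ↦ le_z_sub θ (subset hθ)⟩
  rw [← truncatedCherkasField_eq_cherkasField (hN.trans (le_z_sub θ (subset hθ)))]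
  exact (hz θ (subset hθ)).1.hasDerivAt
    (Icc_mem_nhds (by linarith [hθ.1]) (by linarith [hθ.2]))

theorem HasCenterAtZero.exists_periodic_isLargeSolution {A B u : ℝ → ℝ}
    (hc : HasCenterAtZero (abelField A B)) (hB : Continuous B)
    (hu : ∀ θ, HasDerivAt u (A θ) θ) (hu_per : u (2 * π) = u 0) (N : ℝ) :
    ∃ z, IsLargeSolution B u N z ∧ z (2 * π) = z 0 := by
  obtain ⟨ε, hε, hclosed⟩ := hc
  have hu_cont : Continuous u := continuous_iff_continuousAt.2 fun θ ↦ (hu θ).continuousAt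
  set N' := max N (max 1 (2 / ε))
  have hN' : N ≤ N' := le_max_left _ _
  have hN'1 : 1 ≤ N' := (le_max_left _ _).trans (le_max_right _ _)
  have hN'ε : 2 / ε ≤ N' := (le_max_right _ _).trans (le_max_right _ _)
  obtain ⟨z, hz⟩ := exists_isLargeSolution hB hu_cont hN'1
  have pos (θ : ℝ) (hθ : θ ∈ Icc 0 (2 * π)) : 0 < z θ - u θ := by linarith [hz.le_sub θ hθ]
  have small : |(z 0 - u 0)⁻¹| < ε := by
    have h0 : (0 : ℝ) ∈ Icc 0 (2 * π) := left_mem_Icc.2 two_pi_pos.le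
    rw [abs_of_pos (inv_pos.2 (pos 0 h0)), inv_lt_comm₀ (pos 0 h0) hε]
    calc ε⁻¹ < 2 / ε := by rw [inv_eq_one_div]; gcongr; norm_num
      _ ≤ z 0 - u 0 := hN'ε.trans (hz.le_sub 0 h0)
  have closed : (z (2 * π) - u (2 * π))⁻¹ = (z 0 - u 0)⁻¹ :=
    hclosed (fun θ ↦ (z θ - u θ)⁻¹) small fun θ hθ ↦
      hasDerivAt_abelField_of_cherkasField (hu θ) (hz.hasDerivAt θ hθ) (pos θ hθ).ne'
  exact ⟨z, ⟨hz.hasDerivAt, fun θ hθ ↦ hN'.trans (hz.le θ hθ),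
    fun θ hθ ↦ hN'.trans (hz.le_sub θ hθ)⟩, by linarith [inv_injective closed]⟩

/-! ### Vanishing of the first moments -/

theorem exists_periodic_primitive_sub_mean {f : ℝ → ℝ} (hf : Continuous f) {T : ℝ}
    (hT : T ≠ 0) : ∃ F : ℝ → ℝ,
      (∀ x, HasDerivAt F (f x - (∫ y in (0)..T, f y) / T) x) ∧ F T = F 0 := by
  refine ⟨fun x ↦ (∫ y in (0)..x, f y) - (∫ y in (0)..T, f y) / T * x, fun x ↦ ?_, ?_⟩
  · simpa using! (hf.integral_hasStrictDerivAt 0 x).hasDerivAt.sub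
      ((hasDerivAt_id x).const_mul ((∫ y in (0)..T, f y) / T))
  · simp [hT]

theorem polynomial_eq_zero_of_frequently_abs_eval_lt {P : Polynomial ℝ}
    (hP : ∀ ε > 0, ∃ᶠ x in atTop, |P.eval x| < ε) : P = 0 := by
  rcases lt_or_ge 0 P.degree with hdeg | hdeg
  · have large : ∀ᶠ x in atTop, 1 ≤ |P.eval x| := (P.abs_tendsto_atTop hdeg).eventually_ge_atTop 1
    exact absurd (large.mono fun x hx ↦ not_lt.2 hx) (hP 1 one_pos)
  · rw [Polynomial.eq_C_of_degree_le_zero hdeg] at hP ⊢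
    by_contra hne
    obtain ⟨x, hx⟩ := (hP _ (abs_pos.2 (by simpa using hne))).exists
    simp at hx

section Rolle

variable {B u z F₀ F₁ F₂ : ℝ → ℝ} {m₀ m₁ m₂ θ : ℝ}

theorem hasDerivAt_sq_div_two_add_div_add_div_sq
    (hz : HasDerivAt z (cherkasField B u θ (z θ)) θ) (hF₀ : HasDerivAt F₀ (B θ - m₀) θ)
    (hF₁ : HasDerivAt F₁ (B θ * u θ - m₁) θ) (hF₂ : HasDerivAt F₂ (B θ * u θ ^ 2 - m₂) θ)
    (hne : z θ ≠ 0) (hne' : z θ - u θ ≠ 0) :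
    HasDerivAt (fun t ↦ z t ^ 2 / 2 + F₀ t + F₁ t / z t + F₂ t / z t ^ 2)
      ((B θ * (F₁ θ - u θ ^ 3 + 2 * F₂ θ / z θ) / (z θ - u θ)
        - (m₀ * z θ ^ 2 + m₁ * z θ + m₂)) / z θ ^ 2) θ := by
  refine (((((hz.pow 2).div_const 2).add hF₀).add (hF₁.div hz hne)).add
    (hF₂.div (hz.pow 2) (pow_ne_zero 2 hne))).congr_deriv ?_
  simp only [cherkasField, Pi.pow_apply]
  field_simp
  ring

theorem exists_quadratic_eq_of_isLargeSolution {N : ℝ} (hN : 0 < N) (hz : IsLargeSolution B u N z)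
    (hz_per : z (2 * π) = z 0)
    (hF₀ : ∀ θ, HasDerivAt F₀ (B θ - m₀) θ) (hF₀_per : F₀ (2 * π) = F₀ 0)
    (hF₁ : ∀ θ, HasDerivAt F₁ (B θ * u θ - m₁) θ) (hF₁_per : F₁ (2 * π) = F₁ 0)
    (hF₂ : ∀ θ, HasDerivAt F₂ (B θ * u θ ^ 2 - m₂) θ) (hF₂_per : F₂ (2 * π) = F₂ 0) :
    ∃ θ ∈ Icc 0 (2 * π), m₀ * z θ ^ 2 + m₁ * z θ + m₂ =
      B θ * (F₁ θ - u θ ^ 3 + 2 * F₂ θ / z θ) / (z θ - u θ) := by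
  have ne (θ : ℝ) (hθ : θ ∈ Icc 0 (2 * π)) : z θ ≠ 0 := (hN.trans_le (hz.le θ hθ)).ne'
  have deriv (θ : ℝ) (hθ : θ ∈ Icc 0 (2 * π)) :=
    hasDerivAt_sq_div_two_add_div_add_div_sq (hz.hasDerivAt θ hθ) (hF₀ θ) (hF₁ θ) (hF₂ θ)
      (ne θ hθ) (hN.trans_le (hz.le_sub θ hθ)).ne'
  obtain ⟨c, hc, hc₀⟩ := exists_hasDerivAt_eq_zero two_pi_pos
    (fun θ hθ ↦ (deriv θ hθ).continuousAt.continuousWithinAt)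
    (by simp only [hz_per, hF₀_per, hF₁_per, hF₂_per])
    (fun θ hθ ↦ deriv θ (Ioo_subset_Icc_self hθ))
  have hc' := Ioo_subset_Icc_self hc
  refine ⟨c, hc', (sub_eq_zero.1 ?_).symm⟩
  exact (div_eq_zero_iff.1 hc₀).resolve_right (pow_ne_zero 2 (ne c hc'))

end Rolle

section Moments

variable {A B u : ℝ → ℝ}

theorem HasCenterAtZero.frequently_abs_quadratic_lt (hc : HasCenterAtZero (abelField A B))
    (hB : Continuous B) (hu : ∀ θ, HasDerivAt u (A θ) θ) (hu_per : u (2 * π) = u 0)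
    {F₀ F₁ F₂ : ℝ → ℝ} {m₀ m₁ m₂ : ℝ}
    (hF₀ : ∀ θ, HasDerivAt F₀ (B θ - m₀) θ) (hF₀_per : F₀ (2 * π) = F₀ 0)
    (hF₁ : ∀ θ, HasDerivAt F₁ (B θ * u θ - m₁) θ) (hF₁_per : F₁ (2 * π) = F₁ 0)
    (hF₂ : ∀ θ, HasDerivAt F₂ (B θ * u θ ^ 2 - m₂) θ) (hF₂_per : F₂ (2 * π) = F₂ 0)
    {ε : ℝ} (hε : 0 < ε) : ∃ᶠ x in atTop, |m₀ * x ^ 2 + m₁ * x + m₂| < ε := by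
  have hu_cont : Continuous u := continuous_iff_continuousAt.2 fun θ ↦ (hu θ).continuousAt
  have hF₁_cont : Continuous F₁ := continuous_iff_continuousAt.2 fun θ ↦ (hF₁ θ).continuousAt
  have hF₂_cont : Continuous F₂ := continuous_iff_continuousAt.2 fun θ ↦ (hF₂ θ).continuousAt
  have hG : Continuous fun θ ↦ |B θ| * (|F₁ θ - u θ ^ 3| + 2 * |F₂ θ|) := by fun_prop
  obtain ⟨C, hC⟩ := (isCompact_Icc (a := 0) (b := 2 * π)).exists_bound_of_continuousOn
    hG.continuousOn
  refine frequently_atTop.2 fun M ↦ ?_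
  set N := max M (max 1 ((C + 1) / ε))
  have hMN : M ≤ N := le_max_left _ _
  have hN : 1 ≤ N := (le_max_left _ _).trans (le_max_right _ _)
  have hCN : C < ε * N := by
    have : (C + 1) / ε ≤ N := (le_max_right _ _).trans (le_max_right _ _)
    linarith [(div_le_iff₀' hε).1 this]
  obtain ⟨z, hz, hz_per⟩ := hc.exists_periodic_isLargeSolution hB hu hu_per N
  obtain ⟨θ, hθ, heq⟩ := exists_quadratic_eq_of_isLargeSolution (by positivity) hz hz_per
    hF₀ hF₀_per hF₁ hF₁_per hF₂ hF₂_per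
  have one_le_z : 1 ≤ z θ := hN.trans (hz.le θ hθ)
  have le_D : N ≤ z θ - u θ := hz.le_sub θ hθ
  refine ⟨z θ, hMN.trans (hz.le θ hθ), ?_⟩
  rw [heq, abs_div, abs_of_pos (by linarith : 0 < z θ - u θ), div_lt_iff₀ (by linarith)]
  calc |B θ * (F₁ θ - u θ ^ 3 + 2 * F₂ θ / z θ)|
      ≤ |B θ| * (|F₁ θ - u θ ^ 3| + |2 * F₂ θ / z θ|) := by
        rw [abs_mul]
        gcongr
        exact abs_add_le _ _
    _ ≤ |B θ| * (|F₁ θ - u θ ^ 3| + 2 * |F₂ θ|) := by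
        rw [abs_div, abs_mul, abs_two, abs_of_pos (by linarith : 0 < z θ)]
        gcongr
        exact div_le_self (by positivity) one_le_z
    _ ≤ C := (le_abs_self _).trans (hC θ hθ)
    _ < ε * (z θ - u θ) := hCN.trans_le (by gcongr)

open Polynomial in
theorem HasCenterAtZero.integral_mul_pow_eq_zero (hc : HasCenterAtZero (abelField A B))
    (hB : Continuous B) (hu : ∀ θ, HasDerivAt u (A θ) θ) (hu_per : u (2 * π) = u 0)
    {k : ℕ} (hk : k ≤ 2) : ∫ θ in (0)..(2 * π), B θ * u θ ^ k = 0 := by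
  have hu_cont : Continuous u := continuous_iff_continuousAt.2 fun θ ↦ (hu θ).continuousAt
  choose F hF hF_per using fun k : ℕ ↦
    exists_periodic_primitive_sub_mean (hB.mul (hu_cont.pow k)) two_pi_pos.ne'
  set m : ℕ → ℝ := fun k ↦ (∫ θ in (0)..(2 * π), B θ * u θ ^ k) / (2 * π) with hm
  suffices m k = 0 from (div_eq_zero_iff.1 this).resolve_right two_pi_pos.ne'
  have hP : C (m 0) * X ^ 2 + C (m 1) * X + C (m 2) = 0 := by
    refine polynomial_eq_zero_of_frequently_abs_eval_lt fun ε hε ↦ ?_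
    simpa using hc.frequently_abs_quadratic_lt hB hu hu_per (by simpa [hm] using hF 0) (hF_per 0)
      (by simpa [hm] using hF 1) (hF_per 1) (hF 2) (hF_per 2) hε
  have hcoeff (j : ℕ) := congrArg (coeff · j) hP
  interval_cases k
  · simpa [coeff_X] using hcoeff 2
  · simpa [coeff_X_of_ne_one] using hcoeff 1
  · simpa using hcoeff 0

end Moments

/-! ### Linear and quadratic forms on the unit circle -/

/-- The linear form `a x + b y` on the unit circle `(x, y) = (cos θ, sin θ)`. -/
noncomputable def circleLinear (a b θ : ℝ) : ℝ :=
  a * cos θ + b * sin θ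

/-- The quadratic form `a x² + b x y + c y²` on the unit circle `(x, y) = (cos θ, sin θ)`. -/
noncomputable def circleQuadratic (a b c θ : ℝ) : ℝ :=
  a * cos θ ^ 2 + b * cos θ * sin θ + c * sin θ ^ 2

@[fun_prop]
theorem continuous_circleLinear (a b : ℝ) : Continuous (circleLinear a b) := by
  unfold circleLinear
  fun_prop

@[fun_prop]
theorem continuous_circleQuadratic (a b c : ℝ) : Continuous (circleQuadratic a b c) := by
  unfold circleQuadratic
  fun_prop

theorem periodic_circleLinear (a b : ℝ) : Function.Periodic (circleLinear a b) (2 * π) := by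
  intro θ
  simp only [circleLinear, cos_add_two_pi, sin_add_two_pi]

theorem periodic_circleQuadratic (a b c : ℝ) :
    Function.Periodic (circleQuadratic a b c) (2 * π) := by
  intro θ
  simp only [circleQuadratic, cos_add_two_pi, sin_add_two_pi]

theorem hasDerivAt_circleLinear (a b θ : ℝ) :
    HasDerivAt (circleLinear (-b) a) (circleLinear a b θ) θ := by
  refine (((hasDerivAt_cos θ).const_mul (-b)).add
    ((hasDerivAt_sin θ).const_mul a)).congr_deriv ?_
  simp only [circleLinear]
  ring

theorem circleLinear_sq (a b θ : ℝ) :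
    circleLinear a b θ ^ 2 = circleQuadratic (a ^ 2) (2 * a * b) (b ^ 2) θ := by
  simp only [circleLinear, circleQuadratic]
  ring

theorem circleQuadratic_eq_double_angle (a b c θ : ℝ) :
    circleQuadratic a b c θ =
      (a + c) / 2 + (a - c) / 2 * cos (2 * θ) + b / 2 * sin (2 * θ) := by
  rw [circleQuadratic, cos_two_mul, sin_two_mul, sin_sq]
  ring

theorem integral_trigPolynomial (c a₁ b₁ a₂ b₂ : ℝ) :
    ∫ θ in (0)..(2 * π), (c + a₁ * cos (2 * θ) + b₁ * sin (2 * θ)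
      + a₂ * cos (4 * θ) + b₂ * sin (4 * θ)) = 2 * π * c := by
  have hasDerivAt_primitive (θ : ℝ) : HasDerivAt
      (fun θ ↦ c * θ + a₁ / 2 * sin (2 * θ) - b₁ / 2 * cos (2 * θ)
        + a₂ / 4 * sin (4 * θ) - b₂ / 4 * cos (4 * θ))
      (c + a₁ * cos (2 * θ) + b₁ * sin (2 * θ) + a₂ * cos (4 * θ) + b₂ * sin (4 * θ)) θ := by
    have hmul (k : ℝ) : HasDerivAt (fun θ ↦ k * θ) k θ := by
      simpa using (hasDerivAt_id θ).const_mul k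
    refine (((((hmul c).add ((hmul 2).sin.const_mul (a₁ / 2))).sub
      ((hmul 2).cos.const_mul (b₁ / 2))).add ((hmul 4).sin.const_mul (a₂ / 4))).sub
      ((hmul 4).cos.const_mul (b₂ / 4))).congr_deriv ?_
    ring
  rw [intervalIntegral.integral_eq_sub_of_hasDerivAt (fun θ _ ↦ hasDerivAt_primitive θ)
    (Continuous.intervalIntegrable (by fun_prop) _ _)]
  have sin_two : sin (2 * (2 * π)) = 0 := by simpa using sin_nat_mul_two_pi_sub 0 2
  have sin_four : sin (4 * (2 * π)) = 0 := by simpa using sin_nat_mul_two_pi_sub 0 4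
  have cos_two : cos (2 * (2 * π)) = 1 := mod_cast cos_nat_mul_two_pi 2
  have cos_four : cos (4 * (2 * π)) = 1 := mod_cast cos_nat_mul_two_pi 4
  simp only [sin_two, sin_four, cos_two, cos_four, mul_zero, sin_zero, cos_zero]
  ring

theorem integral_circleQuadratic_mul (a b c a' b' c' : ℝ) :
    ∫ θ in (0)..(2 * π), circleQuadratic a b c θ * circleQuadratic a' b' c' θ =
      π / 4 * (3 * a * a' + a * c' + b * b' + c * a' + 3 * c * c') := by
  have hprod (θ : ℝ) : circleQuadratic a b c θ * circleQuadratic a' b' c' θ =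
      (3 * a * a' + a * c' + b * b' + c * a' + 3 * c * c') / 8
        + (a * a' - c * c') / 2 * cos (2 * θ)
        + ((a + c) * b' + b * (a' + c')) / 4 * sin (2 * θ)
        + ((a - c) * (a' - c') - b * b') / 8 * cos (4 * θ)
        + ((a - c) * b' + b * (a' - c')) / 8 * sin (4 * θ) := by
    rw [circleQuadratic_eq_double_angle, circleQuadratic_eq_double_angle,
      show 4 * θ = 2 * (2 * θ) by ring, cos_two_mul (2 * θ), sin_two_mul (2 * θ)]
    linear_combination b * b' / 4 * sin_sq_add_cos_sq (2 * θ)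
  simp only [hprod, integral_trigPolynomial]
  ring

theorem integral_circleQuadratic (a b c : ℝ) :
    ∫ θ in (0)..(2 * π), circleQuadratic a b c θ = π * (a + c) := by
  have one_eq (θ : ℝ) : circleQuadratic 1 0 1 θ = 1 := by simp [circleQuadratic]
  calc ∫ θ in (0)..(2 * π), circleQuadratic a b c θ
      = ∫ θ in (0)..(2 * π), circleQuadratic a b c θ * circleQuadratic 1 0 1 θ := by
        simp only [one_eq, mul_one]
    _ = π * (a + c) := by rw [integral_circleQuadratic_mul]; ring

theorem odd_circleLinear {a b t : ℝ} (ht : circleLinear a b t = 0) :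
    Function.Odd fun s ↦ circleLinear a b (t + s) := by
  intro s
  simp only [circleLinear, cos_add, sin_add, cos_neg, sin_neg] at ht ⊢
  linear_combination 2 * cos s * ht

theorem odd_circleQuadratic {a b t : ℝ} (ht : circleQuadratic a b (-a) t = 0) :
    Function.Odd fun s ↦ circleQuadratic a b (-a) (t + s) := by
  intro s
  simp only [circleQuadratic, cos_add, sin_add, cos_neg, sin_neg] at ht ⊢
  linear_combination 2 * (cos s ^ 2 - sin s ^ 2) * ht

theorem exists_circleLinear_eq_zero_and_circleQuadratic_eq_zero {a b p q s : ℝ}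
    (hab : a ^ 2 + b ^ 2 ≠ 0) (h : p * b ^ 2 - q * a * b + s * a ^ 2 = 0) :
    ∃ t, circleLinear a b t = 0 ∧ circleQuadratic p q s t = 0 := by
  obtain ⟨ρ, t, ha, hb⟩ : ∃ ρ t, a = -(ρ * sin t) ∧ b = ρ * cos t := by
    refine ⟨‖(⟨b, -a⟩ : ℂ)‖, Complex.arg ⟨b, -a⟩, ?_, ?_⟩
    · rw [Complex.norm_mul_sin_arg, neg_neg]
    · rw [Complex.norm_mul_cos_arg]
  have hρ : ρ ≠ 0 := by
    rintro rfl
    simp [ha, hb] at hab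
  refine ⟨t, ?_, ?_⟩
  · rw [circleLinear, ha, hb]
    ring
  · refine (mul_eq_zero.1 ?_).resolve_left (pow_ne_zero 2 hρ)
    rw [ha, hb] at h
    rw [circleQuadratic]
    linear_combination h

theorem hasCenterAtZero_circle {a b p q : ℝ} (hab : a ^ 2 + b ^ 2 ≠ 0)
    (h : p * (b ^ 2 - a ^ 2) - q * a * b = 0) :
    HasCenterAtZero (abelField (circleLinear a b) (circleQuadratic p q (-p))) := by
  obtain ⟨t, ht, ht'⟩ : ∃ t, circleLinear a b t = 0 ∧ circleQuadratic p q (-p) t = 0 :=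
    exists_circleLinear_eq_zero_and_circleQuadratic_eq_zero hab (by linear_combination h)
  exact hasCenterAtZero_of_odd
    (lipschitzOnBounded_abelField (continuous_circleLinear a b) (continuous_circleQuadratic p q _))
    (periodic_abelField (periodic_circleLinear a b) (periodic_circleQuadratic p q _))
    (odd_abelField (odd_circleLinear ht) (odd_circleQuadratic ht'))

/-- Corollary 2.4: the equation `dr/dθ = r (P₁ r + P₂ r²)` has a center at `r = 0` iff
`p₂₀ + p₀₂ = 0` and `p₂₀(p₀₁² − p₁₀²) − p₁₁ p₁₀ p₀₁ = 0`. -/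
theorem cubic_center_conditions
    (p10 p01 p20 p11 p02 : ℝ) (h : p10 ^ 2 + p01 ^ 2 ≠ 0)
    (P1 P2 : ℝ → ℝ)
    (hP1 : ∀ θ, P1 θ = p10 * Real.cos θ + p01 * Real.sin θ)
    (hP2 : ∀ θ, P2 θ = p20 * Real.cos θ ^ 2 + p11 * Real.cos θ * Real.sin θ +
      p02 * Real.sin θ ^ 2) :
    HasCenterAtZero (fun θ r => r * (P1 θ * r + P2 θ * r ^ 2)) ↔
      (p20 + p02 = 0 ∧ p20 * (p01 ^ 2 - p10 ^ 2) - p11 * p10 * p01 = 0) := by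
  obtain rfl : P1 = circleLinear p10 p01 := funext hP1
  obtain rfl : P2 = circleQuadratic p20 p11 p02 := funext hP2
  change HasCenterAtZero (abelField _ _) ↔ _
  constructor
  · intro hc
    have hmoment {k : ℕ} (hk : k ≤ 2) := hc.integral_mul_pow_eq_zero (by fun_prop)
      (hasDerivAt_circleLinear p10 p01) (periodic_circleLinear _ _).eq hk
    have hmean : p20 + p02 = 0 := by
      simpa [integral_circleQuadratic, pi_ne_zero] using hmoment zero_le_two
    have hsq := hmoment le_rfl
    simp only [circleLinear_sq, integral_circleQuadratic_mul] at hsq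
    refine ⟨hmean, (mul_eq_zero.1 ?_).resolve_left pi_ne_zero⟩
    linear_combination 2 * hsq - π / 2 * (p01 ^ 2 + 3 * p10 ^ 2) * hmean
  · rintro ⟨hmean, h'⟩
    obtain rfl := eq_neg_of_add_eq_zero_right hmean
    exact hasCenterAtZero_circle h h'
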